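/- For every natural number n ≥ 3, every dominating broadcast on the cycle graph C_n has cost at least ⌈n/3⌉. -/

import Mathlib

open SimpleGraph Finset

/-- A dominating broadcast on `G`: every vertex is within distance `f u` of some
vertex `u` with `f u ≥ 1` (distances are measured by the graph metric `G.dist`). -/
def IsDominatingBroadcast {V : Type*} (G : SimpleGraph V) (f : V → ℕ) : Prop :=
  ∀ v : V, ∃ u : V, 1 ≤ f u ∧ G.dist u v ≤ f u

/-- A walk of length `L` in the cycle displaces the index by at most `L` modulo `n`. -/
theorem walk_displacement (n : ℕ) {u v : Fin n}
    (p : (SimpleGraph.cycleGraph n).Walk u v) :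
    ∃ z : ℤ, -(p.length : ℤ) ≤ z ∧ z ≤ p.length ∧ (v : ℤ) ≡ u + z [ZMOD n] := by
  induction p with
  | nil => exact ⟨0, by simp⟩
  | @cons a b c h p ih =>
    obtain ⟨z, h1, h2, h3⟩ := ih
    have key : (b : ℤ) ≡ a + 1 [ZMOD n] ∨ (b : ℤ) ≡ a + (-1) [ZMOD n] := by
      rw [SimpleGraph.cycleGraph_adj'] at h
      have ha := a.isLt
      have hb := b.isLt
      rw [Fin.sub_def, Fin.sub_def] at h
      simp only at h
      have e : ∀ x y : ℕ, y < n → (n - y + x) % n = 1 → (x : ℤ) ≡ y + 1 [ZMOD n] := by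
        intro x y hy hxy
        have h4 := Nat.div_add_mod (n - y + x) n
        rw [hxy] at h4
        apply Int.ModEq.symm
        rw [Int.modEq_iff_dvd]
        refine ⟨((n - y + x) / n : ℕ) - 1, ?_⟩
        generalize (n - y + x) / n = q at h4 ⊢
        zify [hy.le] at h4
        linarith
      rcases h with h | h
      · right
        have := (e _ _ hb h).add_right (-1)
        simp only [add_neg_cancel_right] at this
        exact this.symm
      · left
        exact e _ _ ha h
    simp only [SimpleGraph.Walk.length_cons]
    rcases key with k | k
    · refine ⟨1 + z, by push_cast; linarith, by push_cast; linarith, h3.trans ?_⟩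
      have := k.add_right z
      rwa [add_assoc] at this
    · refine ⟨-1 + z, by push_cast; linarith, by push_cast; linarith, h3.trans ?_⟩
      have := k.add_right z
      rwa [add_assoc] at this

/-- Balls of radius `k` in the cycle have at most `2 k + 1` vertices. -/
theorem card_ball_le (n : ℕ) (hn : 3 ≤ n) (u : Fin n) (k : ℕ) :
    #{v : Fin n | (SimpleGraph.cycleGraph n).dist u v ≤ k} ≤ 2 * k + 1 := by
  obtain ⟨m, rfl⟩ : ∃ m, n = m + 1 := ⟨n - 1, by omega⟩
  have hc : (SimpleGraph.cycleGraph (m + 1)).Connected := SimpleGraph.cycleGraph_connected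
  have hcard : #(Finset.Icc (-(k : ℤ)) k) = 2 * k + 1 := by
    rw [Int.card_Icc]; omega
  have himg : #(({v : Fin (m + 1) | (SimpleGraph.cycleGraph (m + 1)).dist u v ≤ k} :
      Finset (Fin (m + 1))).image (fun v : Fin (m + 1) => ((v : ℕ) : ℤ))) ≤ 2 * k + 1 := by
    rw [← hcard]
    refine (Finset.card_le_card ?_).trans
      (Finset.card_image_le (f := fun z : ℤ => ((u : ℤ) + z) % ((m + 1 : ℕ) : ℤ)))
    intro x hx
    simp only [Finset.mem_image, Finset.mem_filter, Finset.mem_univ, true_and] at hx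
    obtain ⟨v, hv, rfl⟩ := hx
    obtain ⟨p, hp⟩ := hc.exists_walk_length_eq_dist u v
    obtain ⟨z, h1, h2, h3⟩ := walk_displacement _ p
    refine Finset.mem_image.2 ⟨z, Finset.mem_Icc.2 ⟨by omega, by omega⟩, ?_⟩
    have h4 := h3.symm.eq
    rw [h4]
    exact Int.emod_eq_of_lt (by omega) (by exact_mod_cast v.isLt)
  rwa [Finset.card_image_of_injective] at himg
  intro a b hab
  simp only [Nat.cast_inj] at hab
  exact Fin.ext hab

/-- For every natural number `n ≥ 3`, every dominating broadcast on the
cycle graph `C_n` has cost at least `⌈n/3⌉`. -/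
theorem cycleGraph_broadcast_cost_lower_bound (n : ℕ) (hn : 3 ≤ n)
    (f : Fin n → ℕ) (hf : IsDominatingBroadcast (SimpleGraph.cycleGraph n) f) :
    ⌈(n : ℚ) / 3⌉₊ ≤ ∑ v, f v := by
  have h : n ≤ 3 * ∑ v, f v := by
    have hcov : (Finset.univ : Finset (Fin n)) ⊆
        Finset.univ.biUnion (fun u => ({v : Fin n | 1 ≤ f u ∧
          (SimpleGraph.cycleGraph n).dist u v ≤ f u} : Finset (Fin n))) := by
      intro v _
      obtain ⟨u, hu⟩ := hf v
      simp only [Finset.mem_biUnion, Finset.mem_filter, Finset.mem_univ, true_and]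
      exact ⟨u, hu⟩
    have h1 := (Finset.card_le_card hcov).trans Finset.card_biUnion_le
    rw [Finset.card_univ, Fintype.card_fin] at h1
    rw [Finset.mul_sum]
    refine h1.trans (Finset.sum_le_sum fun u _ => ?_)
    by_cases hu : 1 ≤ f u
    · have := card_ball_le n hn u (f u)
      simp only [hu, true_and]
      omega
    · simp [hu]
  rw [Nat.ceil_le, div_le_iff₀ (by norm_num)]
  have h' : (n : ℚ) ≤ 3 * ((∑ v, f v : ℕ) : ℚ) := by exact_mod_cast h
  linarith
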